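/- arXiv:1001.1959 — 2 statements merged into one kernel-verified Lean document; each statement's English description precedes it below -/
import Mathlib

section
/- Let A be a von Neumann algebra acting on H, let Ω ∈ H, and let (P_t)_{t≥0} be an increasing family of orthogonal projections on H. Let f : [0,∞) → B(H) take values in A, be hermitian, increasing, and adapted-commuting with respect to (P_t). Fix t > 0 and let X : [0,t] → A satisfy X(s)Ω = P_s (X(t)Ω) for all 0 ≤ s ≤ t. For a partition θ = {0 = t_0 < ⋯ < t_m = t} of [0,t] set S_θ = Σ_{k=1}^m f(t_{k−1})(X(t_k) − X(t_{k−1})). Then for every x' in the commutant A' of A, the net (S_θ (x'Ω)), indexed by the partitions of [0,t] directed by refinement, converges in norm in H; moreover, denoting the limit by I(x'Ω), one has I((y' x')Ω) = y' I(x'Ω) for all x', y' ∈ A'. -/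
/-- `sigmaSum f X θ` is the integral sum S_θ = Σ_{k=1}^m f(t_{k−1})(X(t_k) − X(t_{k−1}))
where t₀ < t₁ < ⋯ < tₘ is the increasing enumeration of the finite set θ. -/
noncomputable def sigmaSum {H : Type*} [NormedAddCommGroup H] [InnerProductSpace ℂ H]
    (f X : ℝ → H →L[ℂ] H) (θ : Finset ℝ) : H →L[ℂ] H :=
  (((θ.sort (· ≤ ·)).zip (θ.sort (· ≤ ·)).tail).map
    (fun p => f p.1 ∘L (X p.2 - X p.1))).sum

/-- `IsPartitionOf a b θ`: θ is a partition a = t₀ < t₁ < ⋯ < tₘ = b of [a,b]. -/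
def IsPartitionOf (a b : ℝ) (θ : Finset ℝ) : Prop :=
  a ∈ θ ∧ b ∈ θ ∧ ∀ x ∈ θ, x ∈ Set.Icc a b

noncomputable def zs {E : Type*} [AddCommGroup E] (g : ℝ → ℝ → E) (l : List ℝ) : E :=
  ((l.zip l.tail).map (fun p => g p.1 p.2)).sum

theorem zs_single {E : Type*} [AddCommGroup E] (g : ℝ → ℝ → E) (a : ℝ) : zs g [a] = 0 := by
  simp [zs]

theorem zs_cons {E : Type*} [AddCommGroup E] (g : ℝ → ℝ → E) (a b : ℝ) (l : List ℝ) :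
    zs g (a :: b :: l) = g a b + zs g (b :: l) := by
  simp [zs]

theorem zs_mono {E : Type*} [AddCommGroup E] [PartialOrder E] [IsOrderedAddMonoid E]
    (g : ℝ → ℝ → E) (t : ℝ)
    (hs : ∀ a c d, 0 ≤ a → a ≤ c → c ≤ d → g a d ≤ g a c + g c d) {l₁ l₂ : List ℝ}
    (h : l₁.Sublist l₂) : ∀ a, 0 ≤ a → (a :: l₂).Pairwise (· < ·) → t ∈ a :: l₁ →
      (∀ x ∈ a :: l₂, x ≤ t) → zs g (a :: l₁) ≤ zs g (a :: l₂) := by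
  induction h with
  | slnil => intro a _ _ _ _; exact le_rfl
  | @cons l₁ l₂ c h ih =>
    intro a ha hp ht hle
    rw [List.pairwise_cons] at hp
    have hac : a < c := hp.1 c (by simp)
    have hct : c ≤ t := hle c (by simp)
    have ht1 : t ∈ l₁ := by
      rcases List.mem_cons.1 ht with h1 | h1
      · linarith
      · exact h1
    have := ih c (by linarith) hp.2 (by simp [ht1])
      (fun x hx => hle x (List.mem_cons_of_mem _ hx))
    rw [zs_cons]
    cases l₁ with
    | nil => simp at ht1
    | cons d l =>
      rw [zs_cons] at this ⊢
      have hcd : c < d := (List.pairwise_cons.1 hp.2).1 d (h.subset (by simp))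
      calc g a d + zs g (d :: l) ≤ (g a c + g c d) + zs g (d :: l) := by
            gcongr; exact hs a c d ha hac.le hcd.le
        _ = g a c + (g c d + zs g (d :: l)) := add_assoc _ _ _
        _ ≤ _ := by gcongr
  | @cons_cons l₁ l₂ c h ih =>
    intro a ha hp ht hle
    rw [List.pairwise_cons] at hp
    have hac : a < c := hp.1 c (by simp)
    have hct : c ≤ t := hle c (by simp)
    have ht1 : t ∈ c :: l₁ := by
      rcases List.mem_cons.1 ht with h1 | h1
      · linarith
      · exact h1
    have := ih c (by linarith) hp.2 ht1
      (fun x hx => hle x (List.mem_cons_of_mem _ hx))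
    rw [zs_cons, zs_cons]
    gcongr

theorem zs_le {E : Type*} [AddCommGroup E] [PartialOrder E] [IsOrderedAddMonoid E]
    (g : ℝ → ℝ → E) (k : ℝ → E) (t : ℝ)
    (hs : ∀ a b, 0 ≤ a → a ≤ b → b ≤ t → g a b ≤ k b - k a) (l : List ℝ) :
    ∀ a, 0 ≤ a → (a :: l).Pairwise (· < ·) → t ∈ a :: l →
      (∀ x ∈ a :: l, x ≤ t) → zs g (a :: l) ≤ k t - k a := by
  induction l with
  | nil =>
    intro a _ _ ht _
    have : t = a := by simpa using ht
    simp [this, zs_single]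
  | cons c l ih =>
    intro a ha hp ht hle
    rw [List.pairwise_cons] at hp
    have hac : a < c := hp.1 c (by simp)
    have hct : c ≤ t := hle c (by simp)
    have ht1 : t ∈ c :: l := by
      rcases List.mem_cons.1 ht with h1 | h1
      · linarith
      · exact h1
    have := ih c (by linarith) hp.2 ht1
      (fun x hx => hle x (List.mem_cons_of_mem _ hx))
    rw [zs_cons]
    calc _ ≤ (k c - k a) + (k t - k c) := add_le_add (hs a c ha hac.le hct) this
      _ = _ := by abel

theorem sort_part {t : ℝ} {θ : Finset ℝ} (h : IsPartitionOf 0 t θ) :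
    ∃ l, θ.sort (· ≤ ·) = 0 :: l ∧ (0 :: l).Pairwise (· < ·) ∧ t ∈ 0 :: l ∧
      (∀ x ∈ 0 :: l, x ≤ t) := by
  obtain ⟨h0, h1, h2⟩ := h
  have hp : (θ.sort (· ≤ ·)).Pairwise (· < ·) := (Finset.sortedLT_sort θ).pairwise
  have hm : ∀ x, x ∈ θ.sort (· ≤ ·) ↔ x ∈ θ := fun x => Finset.mem_sort _
  cases hl : θ.sort (· ≤ ·) with
  | nil => rw [← hm, hl] at h0; simp at h0
  | cons a l =>
    rw [hl] at hp hm
    have ha : a = 0 := by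
      have h3 := (h2 a ((hm a).1 (by simp))).1
      rcases List.mem_cons.1 ((hm 0).2 h0) with h4 | h4
      · exact h4.symm
      · have := (List.pairwise_cons.1 hp).1 0 h4
        linarith
    subst ha
    exact ⟨l, rfl, hp, (hm t).2 h1, fun x hx => (h2 x ((hm x).1 hx)).2⟩

theorem sort_sublist {t : ℝ} {θ₁ θ₂ : Finset ℝ} (h : θ₁ ⊆ θ₂) :
    (θ₁.sort (· ≤ ·)).Sublist (θ₂.sort (· ≤ ·)) := by
  refine List.sublist_of_subperm_of_sortedLE ?_ (Finset.sortedLT_sort θ₁).sortedLE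
    (Finset.sortedLT_sort θ₂).sortedLE
  refine List.subperm_of_subset (Finset.sort_nodup _ _) ?_
  intro x hx
  rw [Finset.mem_sort] at hx ⊢
  exact h hx

theorem zs_sort_mono {E : Type*} [AddCommGroup E] [PartialOrder E] [IsOrderedAddMonoid E]
    (g : ℝ → ℝ → E) (t : ℝ)
    (hs : ∀ a c d, 0 ≤ a → a ≤ c → c ≤ d → g a d ≤ g a c + g c d) {θ₁ θ₂ : Finset ℝ}
    (h1 : IsPartitionOf 0 t θ₁) (h2 : IsPartitionOf 0 t θ₂) (h : θ₁ ⊆ θ₂) :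
    zs g (θ₁.sort (· ≤ ·)) ≤ zs g (θ₂.sort (· ≤ ·)) := by
  have hsub := sort_sublist (t := t) h
  obtain ⟨l₁, e1, -, ht1, -⟩ := sort_part h1
  obtain ⟨l₂, e2, hp, -, hle⟩ := sort_part h2
  rw [e1, e2] at hsub ⊢
  exact zs_mono g t hs (List.cons_sublist_cons.1 hsub) 0 le_rfl hp ht1 hle

theorem sq_bound {H : Type*} [NormedAddCommGroup H] [InnerProductSpace ℂ H] [CompleteSpace H]
    (D : H →L[ℂ] H) (c : ℝ) (h0 : 0 ≤ D) (hc : D ≤ algebraMap ℝ (H →L[ℂ] H) c) (ξ : H) :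
    ‖D ξ‖ ^ 2 ≤ c * RCLike.re (inner ℂ (D ξ) ξ) := by
  have h1 : 0 ≤ (algebraMap ℝ (H →L[ℂ] H) c - D) * D :=
    Commute.mul_nonneg (sub_nonneg.2 hc) h0
      ((Algebra.commute_algebraMap_left c D).sub_left (Commute.refl D))
  have h2 := ((ContinuousLinearMap.nonneg_iff_isPositive _).1 h1).re_inner_nonneg_left ξ
  have hsa : IsSelfAdjoint D := .of_nonneg h0
  have h3 : inner ℂ (D (D ξ)) ξ = inner ℂ (D ξ) (D ξ) := by
    conv_lhs => rw [← hsa.adjoint_eq]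
    rw [ContinuousLinearMap.adjoint_inner_left, hsa.adjoint_eq]
  rw [sub_mul, ContinuousLinearMap.sub_apply, inner_sub_left, ContinuousLinearMap.mul_apply,
    ContinuousLinearMap.mul_apply, h3, map_sub, inner_self_eq_norm_sq] at h2
  have h4 : (algebraMap ℝ (H →L[ℂ] H) c) (D ξ) = (c : ℂ) • D ξ := by
    simp [Algebra.algebraMap_eq_smul_one]
  rw [h4, inner_smul_left] at h2
  have h5 : RCLike.re ((starRingEnd ℂ) (c : ℂ) * inner ℂ (D ξ) ξ)
      = c * RCLike.re (inner ℂ (D ξ) ξ) := by simp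
  rw [h5] at h2
  linarith

/-- norm convergence of the vectors `T θ ξ` for a bounded increasing net -/
theorem net_conv {H : Type*} [NormedAddCommGroup H] [InnerProductSpace ℂ H] [CompleteSpace H]
    {ι : Type*} [SemilatticeSup ι] [OrderBot ι] (T : ι → H →L[ℂ] H) (hT : Monotone T)
    (K : H →L[ℂ] H) (hK : ∀ i, T i ≤ K) (ξ : H) :
    ∃ η, Filter.Tendsto (fun i => T i ξ) Filter.atTop (nhds η) := by
  apply cauchySeq_tendsto_of_complete
  set φ : ι → ℝ := fun i => RCLike.re (inner ℂ (T i ξ) ξ) with hφ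
  have key : ∀ A B : H →L[ℂ] H, A ≤ B →
      RCLike.re (inner ℂ (A ξ) ξ) ≤ RCLike.re (inner ℂ (B ξ) ξ) := by
    intro A B h
    have := ((ContinuousLinearMap.le_def _ _).1 h).re_inner_nonneg_left ξ
    rw [ContinuousLinearMap.sub_apply, inner_sub_left, map_sub] at this
    linarith
  have hbdd : BddAbove (Set.range φ) :=
    ⟨RCLike.re (inner ℂ (K ξ) ξ), by rintro _ ⟨i, rfl⟩; exact key _ _ (hK i)⟩
  set c := ‖K - T ⊥‖
  have hD : ∀ i j, i ≤ j → T j - T i ≤ algebraMap ℝ (H →L[ℂ] H) c := by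
    intro i j hij
    have h1 : T j - T i ≤ K - T ⊥ := sub_le_sub (hK j) (hT bot_le)
    refine h1.trans (IsSelfAdjoint.le_algebraMap_norm_self (.of_nonneg ?_))
    exact sub_nonneg.2 (hK ⊥)
  have hc : 0 ≤ c := norm_nonneg _
  rw [Metric.cauchySeq_iff']
  intro ε hε
  obtain ⟨_, ⟨N, rfl⟩, hN⟩ := exists_lt_of_lt_csSup (Set.range_nonempty φ)
    (show sSup (Set.range φ) - ε ^ 2 / (c + 1) < sSup (Set.range φ) by
      have : 0 < ε ^ 2 / (c + 1) := by positivity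
      linarith)
  refine ⟨N, fun n hn => ?_⟩
  have h1 := sq_bound (T n - T N) c (sub_nonneg.2 (hT hn)) (hD N n hn) ξ
  rw [ContinuousLinearMap.sub_apply, inner_sub_left, map_sub] at h1
  have h2 : φ n ≤ sSup (Set.range φ) := le_csSup hbdd ⟨n, rfl⟩
  have h3 : φ n - φ N < ε ^ 2 / (c + 1) := by linarith
  have h4 : c * (φ n - φ N) < ε ^ 2 := by
    rw [lt_div_iff₀ (by positivity)] at h3
    have : 0 ≤ φ n - φ N := sub_nonneg.2 (key _ _ (hT hn))
    nlinarith
  rw [dist_eq_norm]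
  exact lt_of_pow_lt_pow_left₀ 2 hε.le (h1.trans_lt h4)

def IsLimAt {H : Type*} [NormedAddCommGroup H] [InnerProductSpace ℂ H]
    (f X : ℝ → H →L[ℂ] H) (t : ℝ) (v y : H) : Prop :=
  ∀ ε > (0 : ℝ), ∃ θ₀ : Finset ℝ, IsPartitionOf 0 t θ₀ ∧
        ∀ θ : Finset ℝ, IsPartitionOf 0 t θ → θ₀ ⊆ θ →
          ‖sigmaSum f X θ v - y‖ < ε

theorem IsPartitionOf.union' {t : ℝ} {θ₁ θ₂ : Finset ℝ} (h1 : IsPartitionOf 0 t θ₁)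
    (h2 : IsPartitionOf 0 t θ₂) : IsPartitionOf 0 t (θ₁ ∪ θ₂) := by
  refine ⟨Finset.mem_union_left _ h1.1, Finset.mem_union_left _ h1.2.1, fun x hx => ?_⟩
  rcases Finset.mem_union.1 hx with h | h
  · exact h1.2.2 x h
  · exact h2.2.2 x h

theorem IsLimAt.unique {H : Type*} [NormedAddCommGroup H] [InnerProductSpace ℂ H]
    {f X : ℝ → H →L[ℂ] H} {t : ℝ} {v y z : H} (hy : IsLimAt f X t v y)
    (hz : IsLimAt f X t v z) : y = z := by
  by_contra hne
  have hpos : 0 < ‖y - z‖ := norm_pos_iff.2 (sub_ne_zero.2 hne)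
  obtain ⟨θ₁, h1, k1⟩ := hy (‖y - z‖ / 2) (by positivity)
  obtain ⟨θ₂, h2, k2⟩ := hz (‖y - z‖ / 2) (by positivity)
  have a1 := k1 _ (h1.union' h2) Finset.subset_union_left
  have a2 := k2 _ (h1.union' h2) Finset.subset_union_right
  have : ‖y - z‖ ≤ ‖sigmaSum f X (θ₁ ∪ θ₂) v - z‖ + ‖sigmaSum f X (θ₁ ∪ θ₂) v - y‖ := by
    refine le_trans (le_of_eq ?_) (norm_sub_le _ _)
    congr 1; abel
  linarith

theorem zs_map_congr {E F : Type*} [AddCommGroup E] [AddCommGroup F] (φ : E →+ F)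
    (g : ℝ → ℝ → E) (k : ℝ → ℝ → F) (s : Set ℝ)
    (h : ∀ a ∈ s, ∀ b ∈ s, φ (g a b) = k a b) (l : List ℝ) (hl : ∀ x ∈ l, x ∈ s) :
    φ (zs g l) = zs k l := by
  unfold zs
  rw [map_list_sum, List.map_map]
  congr 1
  apply List.map_congr_left
  rintro ⟨a, b⟩ hab
  have := List.of_mem_zip hab
  exact h a (hl a this.1) b (hl b (List.mem_of_mem_tail this.2))

/-- For a von Neumann algebra A, a vector Ω, increasing projections (P_t),
an A-valued hermitian increasing adapted-commuting f, and X : [0,t] → A with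
X(s)Ω = P_s(X(t)Ω), the net of vectors S_θ(x'Ω) indexed by partitions of [0,t] directed
by refinement converges in norm for every x' ∈ A', and the limit I satisfies
I((y'x')Ω) = y' I(x'Ω). -/
theorem right_integral_exists_monotone
    {H : Type*} [NormedAddCommGroup H] [InnerProductSpace ℂ H] [CompleteSpace H]
    (A : VonNeumannAlgebra H) (Ω : H)
    (P : ℝ → H →L[ℂ] H)
    (hP_proj : ∀ s, 0 ≤ s → IsSelfAdjoint (P s) ∧ P s ∘L P s = P s)
    (hP_mono : ∀ s u, 0 ≤ s → s ≤ u → P s ∘L P u = P s ∧ P u ∘L P s = P s)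
    (f : ℝ → H →L[ℂ] H)
    (hf_mem : ∀ s, 0 ≤ s → f s ∈ A)
    (hf_herm : ∀ s, 0 ≤ s → IsSelfAdjoint (f s))
    (hf_incr : ∀ u v, 0 ≤ u → u ≤ v → (f v - f u).IsPositive)
    (hf_adapted : ∀ s u, 0 ≤ s → s ≤ u → f s ∘L P u = P u ∘L f s)
    (t : ℝ) (ht : 0 < t)
    (X : ℝ → H →L[ℂ] H)
    (hX_mem : ∀ s ∈ Set.Icc (0 : ℝ) t, X s ∈ A)
    (hX_mart : ∀ s, 0 ≤ s → s ≤ t → X s Ω = P s (X t Ω)) :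
    ∃ I : H → H,
      (∀ x' ∈ A.commutant, ∀ ε > (0 : ℝ), ∃ θ₀ : Finset ℝ, IsPartitionOf 0 t θ₀ ∧
        ∀ θ : Finset ℝ, IsPartitionOf 0 t θ → θ₀ ⊆ θ →
          ‖sigmaSum f X θ (x' Ω) - I (x' Ω)‖ < ε) ∧
      (∀ x' ∈ A.commutant, ∀ y' ∈ A.commutant,
        I ((y' * x') Ω) = y' (I (x' Ω))) := by
  have hab : ∀ a b, 0 ≤ a → a ≤ b → Commute (f a) (P b - P a) := by
    intro a b ha hb
    exact Commute.sub_right (hf_adapted a b ha hb) (hf_adapted a a ha le_rfl)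
  have hproj : ∀ a b, 0 ≤ a → a ≤ b → 0 ≤ P b - P a := by
    intro a b ha hb
    apply IsStarProjection.nonneg
    have h1 : P a * P b = P a := (hP_mono a b ha hb).1
    have h2 : P b * P a = P a := (hP_mono a b ha hb).2
    have h3 : P a * P a = P a := (hP_proj a ha).2
    have h4 : P b * P b = P b := (hP_proj b (ha.trans hb)).2
    refine ⟨?_, (hP_proj b (ha.trans hb)).1.sub (hP_proj a ha).1⟩
    show (P b - P a) * (P b - P a) = P b - P a
    rw [sub_mul, mul_sub, mul_sub, h1, h2, h3, h4]
    abel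
  have hfle : ∀ a b, 0 ≤ a → a ≤ b → f a ≤ f b := fun a b ha hb =>
    (ContinuousLinearMap.le_def _ _).2 (hf_incr a b ha hb)
  set g : ℝ → ℝ → H →L[ℂ] H := fun a b => f a * (P b - P a) with hg
  have hsup : ∀ a c d, 0 ≤ a → a ≤ c → c ≤ d → g a d ≤ g a c + g c d := by
    intro a c d ha hc hd
    have h1 : Commute (f c - f a) (P d - P c) := by
      refine (hab c d (ha.trans hc) hd).sub_left ?_
      exact Commute.sub_right (hf_adapted a d ha (hc.trans hd)) (hf_adapted a c ha hc)
    have h2 := Commute.mul_nonneg (sub_nonneg.2 (hfle a c ha hc))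
      (hproj c d (ha.trans hc) hd) h1
    rw [← sub_nonneg]
    convert h2 using 1
    simp only [hg]
    noncomm_ring
  set M := algebraMap ℝ (H →L[ℂ] H) ‖f t‖ with hM
  have hbd : ∀ a b, 0 ≤ a → a ≤ b → b ≤ t → g a b ≤ M * P b - M * P a := by
    intro a b ha hb hbt
    have h0 : f a ≤ M := (hfle a t ha (hb.trans hbt)).trans
      (IsSelfAdjoint.le_algebraMap_norm_self (hf_herm t ht.le))
    have h2 := Commute.mul_nonneg (sub_nonneg.2 h0) (hproj a b ha hb)
      ((Algebra.commute_algebraMap_left ‖f t‖ _).sub_left (hab a b ha hb))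
    rw [← sub_nonneg]
    convert h2 using 1
    simp only [hg]
    noncomm_ring
  have hmin : IsPartitionOf 0 t {0, t} := by
    refine ⟨by simp, by simp, ?_⟩
    intro x hx
    rcases Finset.mem_insert.1 hx with rfl | h
    · exact ⟨le_rfl, ht.le⟩
    · rw [Finset.mem_singleton.1 h]; exact ⟨ht.le, le_rfl⟩
  letI : SemilatticeSup {θ : Finset ℝ // IsPartitionOf 0 t θ} :=
    Subtype.semilatticeSup (fun _ _ h1 h2 => h1.union' h2)
  letI : OrderBot {θ : Finset ℝ // IsPartitionOf 0 t θ} :=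
    { bot := ⟨{0, t}, hmin⟩
      bot_le := by
        rintro ⟨θ, h⟩
        show ({0, t} : Finset ℝ) ⊆ θ
        intro x hx
        rcases Finset.mem_insert.1 hx with rfl | h'
        · exact h.1
        · rw [Finset.mem_singleton.1 h']; exact h.2.1 }
  obtain ⟨η, hη⟩ := net_conv
    (fun θ : {θ : Finset ℝ // IsPartitionOf 0 t θ} => zs g (θ.1.sort (· ≤ ·)))
    (fun θ₁ θ₂ h => zs_sort_mono g t hsup θ₁.2 θ₂.2 h) (M * P t - M * P 0)
    (by
      rintro ⟨θ, h⟩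
      obtain ⟨l, e, h1, h2, h3⟩ := sort_part h
      show zs g (θ.sort (· ≤ ·)) ≤ _
      rw [e]
      exact zs_le g (fun s => M * P s) t hbd l 0 le_rfl h1 h2 h3) (X t Ω)
  have hmemIcc : ∀ θ : Finset ℝ, IsPartitionOf 0 t θ →
      ∀ x ∈ θ.sort (· ≤ ·), x ∈ Set.Icc 0 t := by
    intro θ h x hx
    exact h.2.2 x ((Finset.mem_sort _).1 hx)
  have hsig : ∀ θ : Finset ℝ, IsPartitionOf 0 t θ → ∀ x' ∈ A.commutant,
      sigmaSum f X θ (x' Ω) = x' (zs g (θ.sort (· ≤ ·)) (X t Ω)) := by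
    intro θ h x' hx'
    rw [VonNeumannAlgebra.mem_commutant_iff] at hx'
    let k : ℝ → ℝ → H := fun a b => x' (f a ((P b - P a) (X t Ω)))
    have e1 := zs_map_congr
      (ContinuousLinearMap.apply ℂ H (x' Ω)).toLinearMap.toAddMonoidHom
      (fun a b => f a ∘L (X b - X a)) k (Set.Icc 0 t) (by
        intro a ha b hb
        have c1 : ∀ v, f a (x' v) = x' (f a v) := fun v =>
          DFunLike.congr_fun (hx' (f a) (hf_mem a ha.1)) v
        have c2 : ∀ v, X a (x' v) = x' (X a v) := fun v =>
          DFunLike.congr_fun (hx' (X a) (hX_mem a ha)) v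
        have c3 : ∀ v, X b (x' v) = x' (X b v) := fun v =>
          DFunLike.congr_fun (hx' (X b) (hX_mem b hb)) v
        show f a ((X b - X a) (x' Ω)) = x' (f a ((P b - P a) (X t Ω)))
        rw [ContinuousLinearMap.sub_apply, c2, c3, ← map_sub, c1,
          hX_mart a ha.1 ha.2, hX_mart b hb.1 hb.2, ContinuousLinearMap.sub_apply])
      (θ.sort (· ≤ ·)) (hmemIcc θ h)
    have e2 := zs_map_congr
      (x' ∘L ContinuousLinearMap.apply ℂ H (X t Ω)).toLinearMap.toAddMonoidHom
      g k (Set.Icc 0 t) (by intro a ha b hb; rfl)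
      (θ.sort (· ≤ ·)) (hmemIcc θ h)
    exact e1.trans e2.symm
  have hlim : ∀ x' ∈ A.commutant, IsLimAt f X t (x' Ω) (x' η) := by
    intro x' hx' ε hε
    have h1 := (x'.continuous.tendsto η).comp hη
    rw [Metric.tendsto_atTop] at h1
    obtain ⟨θ₀, h2⟩ := h1 ε hε
    refine ⟨θ₀.1, θ₀.2, fun θ hθ hsub => ?_⟩
    have := h2 ⟨θ, hθ⟩ hsub
    rw [hsig θ hθ x' hx', ← dist_eq_norm]
    exact this
  classical
  let I : H → H := fun v => if h : ∃ y, IsLimAt f X t v y then h.choose else 0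
  have hI : ∀ x' ∈ A.commutant, I (x' Ω) = x' η := by
    intro x' hx'
    have hex : ∃ y, IsLimAt f X t (x' Ω) y := ⟨_, hlim x' hx'⟩
    have : I (x' Ω) = hex.choose := dif_pos hex
    rw [this]
    exact hex.choose_spec.unique (hlim x' hx')
  refine ⟨I, fun x' hx' => ?_, fun x' hx' y' hy' => ?_⟩
  · rw [hI x' hx']
    exact hlim x' hx'
  · rw [hI x' hx', hI (y' * x') (mul_mem hy' hx')]
    rfl
end

section
/- Let A be a von Neumann algebra acting on H, let Ω ∈ H, and let (P_t)_{t≥0} be an increasing family of orthogonal projections on H. Let f : [0,∞) → B(H) take values in A, be norm-continuous, and adapted-commuting with respect to (P_t). Fix t > 0 and let X : [0,t] → A satisfy X(s)Ω = P_s (X(t)Ω) for all 0 ≤ s ≤ t. For a partition θ = {0 = t_0 < ⋯ < t_m = t} of [0,t] set S_θ = Σ_{k=1}^m f(t_{k−1})(X(t_k) − X(t_{k−1})). Then for every x' in the commutant A' of A there exists v ∈ H such that for every ε > 0 there is δ > 0 with ‖S_θ (x'Ω) − v‖ < ε for every partition θ of [0,t] of mesh less than δ; moreover, denoting this limit by I(x'Ω),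 one has I((y' x')Ω) = y' I(x'Ω) for all x', y' ∈ A'. -/
/-- `meshOf θ` is the mesh max_{1≤k≤m}(t_k − t_{k−1}) of the partition θ. -/
noncomputable def meshOf (θ : Finset ℝ) : ℝ :=
  (((θ.sort (· ≤ ·)).zip (θ.sort (· ≤ ·)).tail).map (fun p => p.2 - p.1)).foldr max 0

/-- Vector-valued list Riemann sum. -/
noncomputable def listSum {H : Type*} [NormedAddCommGroup H] [InnerProductSpace ℂ H]
    (g : ℝ → H →L[ℂ] H) (Y : ℝ → H) (l : List ℝ) : H :=
  ((l.zip l.tail).map (fun p => g p.1 (Y p.2 - Y p.1))).sum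

section helpers
variable {H : Type*} [NormedAddCommGroup H] [InnerProductSpace ℂ H]

lemma listSum_cons_cons (g : ℝ → H →L[ℂ] H) (Y : ℝ → H) (a b : ℝ) (l : List ℝ) :
    listSum g Y (a :: b :: l) = g a (Y b - Y a) + listSum g Y (b :: l) := by
  simp [listSum]

lemma listSum_single (g : ℝ → H →L[ℂ] H) (Y : ℝ → H) (a : ℝ) :
    listSum g Y [a] = 0 := by
  simp [listSum]

lemma listSum_congr (g h : ℝ → H →L[ℂ] H) (Y : ℝ → H) (l : List ℝ)
    (hgh : ∀ x ∈ l, g x = h x) : listSum g Y l = listSum h Y l := by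
  unfold listSum
  congr 1
  apply List.map_congr_left
  rintro ⟨p, q⟩ hp
  rw [hgh p (List.of_mem_zip hp).1]

lemma listSum_sub (g h : ℝ → H →L[ℂ] H) (Y : ℝ → H) (l : List ℝ) :
    listSum g Y l - listSum h Y l = listSum (fun x => g x - h x) Y l := by
  cases l with
  | nil => simp [listSum]
  | cons a l =>
    induction l generalizing a with
    | nil => simp [listSum]
    | cons b l ih =>
      rw [listSum_cons_cons, listSum_cons_cons, listSum_cons_cons, ← ih]
      simp only [_root_.sub_apply]
      abel

lemma listSum_insert (g : ℝ → H →L[ℂ] H) (Y : ℝ → H) (c : ℝ) (l : List ℝ) (a : ℝ)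
    (hs : (a :: l).Pairwise (· ≤ ·)) (hac : a < c) (hc : c ∉ l) (hy : ∃ y ∈ l, c ≤ y)
    (hg : ∀ x ∈ a :: l, x < c → (∀ z ∈ a :: l, z ≤ x ∨ c ≤ z) → g x = g c) :
    listSum g Y ((a :: l).orderedInsert (· ≤ ·) c) = listSum g Y (a :: l) := by
  induction l generalizing a with
  | nil => simp at hy
  | cons b l ih =>
    rw [List.orderedInsert_of_not_le _ _ (not_le.mpr hac)]
    rw [List.pairwise_cons] at hs
    obtain ⟨ha, hs⟩ := hs
    have hs2 := List.pairwise_cons.mp hs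
    by_cases hcb : c ≤ b
    · rw [List.orderedInsert_cons_of_le _ _ hcb]
      rw [listSum_cons_cons, listSum_cons_cons, listSum_cons_cons]
      have : g a = g c := by
        apply hg a (by simp) hac
        intro z hz
        simp only [List.mem_cons] at hz
        rcases hz with rfl | rfl | hz
        · left; exact le_rfl
        · right; exact hcb
        · right; exact hcb.trans (hs2.1 z hz)
      rw [← this, ← add_assoc, ← map_add]
      congr 2
      abel
    · have hbc : b < c := not_le.mp hcb
      have h1 := ih b hs hbc (fun h => hc (List.mem_cons_of_mem _ h)) (by
        obtain ⟨y, hy, hcy⟩ := hy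
        rcases List.mem_cons.mp hy with rfl | hy
        · exact absurd hcy hcb
        · exact ⟨y, hy, hcy⟩) (by
        intro x hx hxc hz
        apply hg x (List.mem_cons_of_mem _ hx) hxc
        intro z hz'
        rcases List.mem_cons.mp hz' with rfl | hz'
        · left; exact ha x hx
        · exact hz z hz')
      rw [List.orderedInsert_of_not_le _ _ hcb] at h1 ⊢
      rw [listSum_cons_cons, listSum_cons_cons, h1]

lemma sort_insert_eq (θ : Finset ℝ) (c : ℝ) (hc : c ∉ θ) :
    (insert c θ).sort (· ≤ ·) = (θ.sort (· ≤ ·)).orderedInsert (· ≤ ·) c := by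
  apply List.Perm.eq_of_pairwise' (r := (· ≤ ·))
  · exact Finset.pairwise_sort _ _
  · exact List.Pairwise.orderedInsert _ _ (Finset.pairwise_sort _ _)
  · refine List.Perm.trans ?_ (List.perm_orderedInsert _ _ _).symm
    rw [← Multiset.coe_eq_coe, ← Multiset.cons_coe]
    simp [hc]

lemma sort_eq_cons {t : ℝ} {θ : Finset ℝ} (h : IsPartitionOf 0 t θ) :
    ∃ l, θ.sort (· ≤ ·) = 0 :: l := by
  have hp := Finset.pairwise_sort θ (· ≤ ·)
  have h0 : (0:ℝ) ∈ θ.sort (· ≤ ·) := (Finset.mem_sort _).mpr h.1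
  have hm : ∀ x ∈ θ.sort (· ≤ ·), 0 ≤ x := fun x hx => (h.2.2 x ((Finset.mem_sort _).mp hx)).1
  cases hl : θ.sort (· ≤ ·) with
  | nil => rw [hl] at h0; simp at h0
  | cons a l =>
    rw [hl] at hp h0 hm
    refine ⟨l, ?_⟩
    have h1 := hm a (by simp)
    rcases List.mem_cons.mp h0 with h2 | h2
    · rw [← h2]
    · rw [le_antisymm ((List.pairwise_cons.mp hp).1 0 h2) h1]

/-- Largest point of `θ` below `s`. -/
noncomputable def floorOf (θ : Finset ℝ) (s : ℝ) : ℝ :=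
  sSup ((θ.filter (· ≤ s) : Finset ℝ) : Set ℝ)

lemma floorOf_mem {t : ℝ} {θ : Finset ℝ} (h : IsPartitionOf 0 t θ) {s : ℝ} (hs : 0 ≤ s) :
    floorOf θ s ∈ θ ∧ floorOf θ s ≤ s := by
  have hne : (θ.filter (· ≤ s)).Nonempty := ⟨0, by simp [h.1, hs]⟩
  have := Finset.Nonempty.csSup_mem hne
  exact Finset.mem_filter.mp this

lemma le_floorOf {θ : Finset ℝ} {s p : ℝ} (hp : p ∈ θ) (hps : p ≤ s) : p ≤ floorOf θ s := by
  apply le_csSup (Finset.bddAbove _)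
  simp [hp, hps]

lemma floorOf_self {t : ℝ} {θ : Finset ℝ} (h : IsPartitionOf 0 t θ) {s : ℝ} (hs : s ∈ θ) :
    floorOf θ s = s :=
  le_antisymm (floorOf_mem h (h.2.2 s hs).1).2 (le_floorOf hs le_rfl)

lemma listSum_refine {t : ℝ} {θ : Finset ℝ} (h : IsPartitionOf 0 t θ) (f : ℝ → H →L[ℂ] H)
    (Y : ℝ → H) (η : Finset ℝ) (hη : ∀ x ∈ η, x ∈ Set.Icc 0 t) :
    listSum (fun s => f (floorOf θ s)) Y ((η ∪ θ).sort (· ≤ ·)) =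
      listSum f Y (θ.sort (· ≤ ·)) := by
  induction η using Finset.induction_on with
  | empty =>
    rw [Finset.empty_union]
    apply listSum_congr
    intro x hx
    rw [floorOf_self h ((Finset.mem_sort _).mp hx)]
  | insert c η hc ih =>
    have ih := ih (fun x hx => hη x (Finset.mem_insert_of_mem hx))
    rw [Finset.insert_union]
    by_cases hcm : c ∈ η ∪ θ
    · rw [Finset.insert_eq_of_mem hcm, ih]
    · rw [sort_insert_eq _ _ hcm, ← ih]
      have hpart : IsPartitionOf 0 t (η ∪ θ) := by
        refine ⟨Finset.mem_union_right _ h.1, Finset.mem_union_right _ h.2.1, ?_⟩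
        intro x hx
        rcases Finset.mem_union.mp hx with hx | hx
        · exact hη x (Finset.mem_insert_of_mem hx)
        · exact h.2.2 x hx
      obtain ⟨l, hl⟩ := sort_eq_cons hpart
      have hmem : ∀ x, x ∈ (0 :: l) ↔ x ∈ η ∪ θ := by
        intro x; rw [← hl]; exact Finset.mem_sort _
      have hp := Finset.pairwise_sort (η ∪ θ) (· ≤ ·)
      rw [hl] at hp ⊢
      have hcI := hη c (Finset.mem_insert_self _ _)
      have hc0 : c ∉ (0 :: l) := fun hh => hcm ((hmem c).mp hh)
      have h0c : 0 < c := lt_of_le_of_ne hcI.1 (fun hh => hc0 (by simp [hh]))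
      apply listSum_insert _ _ _ _ _ hp h0c (fun hh => hc0 (List.mem_cons_of_mem _ hh))
      · refine ⟨t, ?_, hcI.2⟩
        have := (hmem t).mpr hpart.2.1
        rcases List.mem_cons.mp this with h1 | h1
        · have := hcI.2
          linarith
        · exact h1
      · intro x hx hxc hz
        have : θ.filter (· ≤ x) = θ.filter (· ≤ c) := by
          ext z
          simp only [Finset.mem_filter]
          constructor
          · rintro ⟨h1, h2⟩; exact ⟨h1, h2.trans hxc.le⟩
          · rintro ⟨h1, h2⟩
            refine ⟨h1, ?_⟩
            have hzm := Finset.mem_union_right η h1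
            rcases hz z ((hmem z).mpr hzm) with h3 | h3
            · exact h3
            · exact absurd (le_antisymm h2 h3 ▸ hzm) hcm
        simp only [floorOf, this]

/-- Mesh of a list. -/
noncomputable def listMesh (l : List ℝ) : ℝ :=
  ((l.zip l.tail).map (fun p => p.2 - p.1)).foldr max 0

lemma listMesh_cons_cons (a b : ℝ) (l : List ℝ) :
    listMesh (a :: b :: l) = max (b - a) (listMesh (b :: l)) := by
  simp [listMesh]

lemma exists_near (l : List ℝ) (a x : ℝ) (hs : (a :: l).Pairwise (· ≤ ·)) (hax : a ≤ x) (hy : ∃ y ∈ a :: l, x ≤ y) :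
    ∃ p ∈ a :: l, p ≤ x ∧ x - p ≤ listMesh (a :: l) := by
  induction l generalizing a with
  | nil =>
    obtain ⟨y, hy, hxy⟩ := hy
    simp at hy
    subst hy
    exact ⟨y, by simp, hax, by simp [listMesh, hxy]⟩
  | cons b l ih =>
    rw [listMesh_cons_cons]
    by_cases hxb : x ≤ b
    · exact ⟨a, by simp, hax, le_max_of_le_left (by linarith)⟩
    · have hbx := (not_le.mp hxb).le
      obtain ⟨p, hp, hpx, hm⟩ := ih b (List.pairwise_cons.mp hs).2 hbx (by
        obtain ⟨y, hy, hxy⟩ := hy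
        rcases List.mem_cons.mp hy with rfl | hy
        · exact absurd (hxy.trans ((List.pairwise_cons.mp hs).1 b (by simp))) hxb
        · exact ⟨y, hy, hxy⟩)
      exact ⟨p, List.mem_cons_of_mem _ hp, hpx, le_max_of_le_right hm⟩

lemma sub_floorOf_le {t : ℝ} {θ : Finset ℝ} (h : IsPartitionOf 0 t θ) {s : ℝ}
    (hs : s ∈ Set.Icc 0 t) : s - floorOf θ s ≤ meshOf θ := by
  obtain ⟨l, hl⟩ := sort_eq_cons h
  have hmem : ∀ x, x ∈ (0 :: l) ↔ x ∈ θ := by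
    intro x; rw [← hl]; exact Finset.mem_sort _
  obtain ⟨p, hp, hps, hm⟩ := exists_near l 0 s (hl ▸ Finset.pairwise_sort θ (· ≤ ·)) hs.1 ⟨t, (hmem t).mpr h.2.1, hs.2⟩
  have h1 := le_floorOf ((hmem p).mp hp) hps
  have h2 : meshOf θ = listMesh (0 :: l) := by rw [← hl]; rfl
  rw [h2]
  linarith

lemma listMesh_le (d : ℝ) (hd : 0 ≤ d) (l : List ℝ) (a : ℝ) (hs : (a :: l).Pairwise (· < ·))
    (h : ∀ x ∈ a :: l, (∃ z ∈ a :: l, x < z) → ∃ y ∈ a :: l, x < y ∧ y ≤ x + d) :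
    listMesh (a :: l) ≤ d := by
  induction l generalizing a with
  | nil => simpa [listMesh] using hd
  | cons b l ih =>
    rw [listMesh_cons_cons]
    rw [List.pairwise_cons] at hs
    obtain ⟨ha, hs⟩ := hs
    have hs2 := List.pairwise_cons.mp hs
    apply max_le
    · obtain ⟨y, hy, h1, h2⟩ := h a (by simp) ⟨b, by simp, ha b (by simp)⟩
      simp only [List.mem_cons] at hy
      rcases hy with rfl | rfl | hy
      · exact absurd h1 (lt_irrefl _)
      · linarith
      · have := hs2.1 y hy
        linarith
    · apply ih b hs
      rintro x hx ⟨z, hz, hxz⟩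
      obtain ⟨y, hy, h1, h2⟩ := h x (List.mem_cons_of_mem _ hx) ⟨z, List.mem_cons_of_mem _ hz, hxz⟩
      rcases List.mem_cons.mp hy with rfl | hy
      · exact absurd (h1.trans (ha x hx)) (lt_irrefl _)
      · exact ⟨y, hy, h1, h2⟩

lemma exists_partition {t : ℝ} (ht : 0 < t) {δ : ℝ} (hδ : 0 < δ) :
    ∃ θ, IsPartitionOf 0 t θ ∧ meshOf θ < δ := by
  obtain ⟨n, hn⟩ := exists_nat_gt (t / δ)
  have hn0 : (0:ℝ) < n := lt_trans (by positivity) hn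
  have hd : 0 < t / n := by positivity
  have hdδ : t / n < δ := by
    rw [div_lt_iff₀ hδ] at hn
    rw [div_lt_iff₀ hn0]; linarith
  let θ : Finset ℝ := (Finset.range (n+1)).image (fun k : ℕ => (k:ℝ) * (t / n))
  have hmθ : ∀ x, x ∈ θ ↔ ∃ k : ℕ, k ≤ n ∧ (k:ℝ) * (t / n) = x := by
    intro x
    simp [θ]
  have hpart : IsPartitionOf 0 t θ := by
    refine ⟨(hmθ _).mpr ⟨0, by simp, by simp⟩, (hmθ _).mpr ⟨n, le_rfl, by field_simp⟩, ?_⟩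
    intro x hx
    obtain ⟨k, hk, rfl⟩ := (hmθ x).mp hx
    refine ⟨by positivity, ?_⟩
    calc (k:ℝ) * (t / n) ≤ n * (t / n) := by gcongr
      _ = t := by field_simp
  refine ⟨θ, hpart, lt_of_le_of_lt ?_ hdδ⟩
  obtain ⟨l, hl⟩ := sort_eq_cons hpart
  have hmem : ∀ x, x ∈ (0 :: l) ↔ x ∈ θ := by
    intro x; rw [← hl]; exact Finset.mem_sort _
  have h2 : meshOf θ = listMesh (0 :: l) := by rw [← hl]; rfl
  rw [h2]
  apply listMesh_le _ hd.le
  · have h3 := Finset.pairwise_sort θ (· ≤ ·)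
    have h4 := Finset.sort_nodup θ (· ≤ ·)
    rw [hl] at h3 h4
    exact (h3.and h4).imp (fun h => lt_of_le_of_ne h.1 h.2)
  · rintro x hx ⟨z, hz, hxz⟩
    obtain ⟨k, hk, rfl⟩ := (hmθ x).mp ((hmem x).mp hx)
    obtain ⟨j, hj, rfl⟩ := (hmθ z).mp ((hmem z).mp hz)
    have hkj : (k:ℝ) < j := lt_of_mul_lt_mul_right hxz hd.le
    have hkj' : k < j := by exact_mod_cast hkj
    refine ⟨((k+1 : ℕ):ℝ) * (t/n), (hmem _).mpr ((hmθ _).mpr ⟨k+1, by omega, rfl⟩), ?_, ?_⟩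
    · push_cast; linarith
    · push_cast; linarith

lemma proj_pythag [CompleteSpace H] (Q : H →L[ℂ] H) (hQ : IsSelfAdjoint Q) (x y : H)
    (hx : Q x = x) (hy : Q y = 0) : ‖x + y‖ ^ 2 = ‖x‖ ^ 2 + ‖y‖ ^ 2 := by
  have : inner ℂ x y = 0 := by
    rw [← hx, ← ContinuousLinearMap.adjoint_inner_right, hQ.adjoint_eq, hy, inner_zero_right]
  have := norm_add_sq_eq_norm_sq_add_norm_sq_of_inner_eq_zero x y this
  nlinarith

lemma listSum_bound [CompleteSpace H] (P : ℝ → H →L[ℂ] H)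
    (hP_proj : ∀ s, 0 ≤ s → IsSelfAdjoint (P s) ∧ P s ∘L P s = P s)
    (hP_mono : ∀ s u, 0 ≤ s → s ≤ u → P s ∘L P u = P s ∧ P u ∘L P s = P s)
    (g : ℝ → H →L[ℂ] H) (ξ : H) (ε : ℝ) (l : List ℝ) (a : ℝ)
    (hs : (a :: l).Pairwise (· ≤ ·)) (h0 : 0 ≤ a)
    (hg : ∀ x ∈ a :: l, ∀ u, x ≤ u → g x ∘L P u = P u ∘L g x)
    (hε : ∀ x ∈ a :: l, ‖g x‖ ≤ ε) :
    P a (listSum g (fun s => P s ξ) (a :: l)) = 0 ∧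
    ‖listSum g (fun s => P s ξ) (a :: l)‖ ^ 2 ≤ ε ^ 2 * (‖ξ‖ ^ 2 - ‖P a ξ‖ ^ 2) := by
  have key : ∀ s u, 0 ≤ s → s ≤ u → ∀ v, P s (P u v) = P s v ∧ P u (P s v) = P s v := by
    intro s u h1 h2 v
    obtain ⟨h3, h4⟩ := hP_mono s u h1 h2
    exact ⟨congrArg (fun T : H →L[ℂ] H => T v) h3, congrArg (fun T : H →L[ℂ] H => T v) h4⟩
  induction l generalizing a with
  | nil =>
    rw [listSum_single]
    refine ⟨map_zero _, ?_⟩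
    have h1 := proj_pythag (P a) (hP_proj a h0).1 (P a ξ) (ξ - P a ξ) (key a a h0 le_rfl ξ).1
      (by rw [map_sub, (key a a h0 le_rfl ξ).1, sub_self])
    rw [add_sub_cancel] at h1
    rw [norm_zero, h1]
    have : (0:ℝ) ≤ ε ^ 2 * ‖ξ - P a ξ‖ ^ 2 := by positivity
    linarith
  | cons b l ih =>
    rw [List.pairwise_cons] at hs
    obtain ⟨ha, hs⟩ := hs
    have hab : a ≤ b := ha b (by simp)
    have hb0 := h0.trans hab
    obtain ⟨ih1, ih2⟩ := ih b hs hb0 (fun x hx => hg x (List.mem_cons_of_mem _ hx))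
      (fun x hx => hε x (List.mem_cons_of_mem _ hx))
    rw [listSum_cons_cons]
    set S := listSum g (fun s => P s ξ) (b :: l)
    have hc : ∀ u, a ≤ u → ∀ v, P u (g a v) = g a (P u v) := by
      intro u hu v
      exact (congrArg (fun T : H →L[ℂ] H => T v) (hg a (by simp) u hu)).symm
    constructor
    · rw [map_add, hc a le_rfl, map_sub, (key a b h0 hab ξ).1, (key a a h0 le_rfl ξ).1,
        sub_self, map_zero, zero_add, ← (key a b h0 hab S).1, ih1, map_zero]
    · have e1 : P b (P b ξ - P a ξ) = P b ξ - P a ξ := by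
        rw [map_sub, (key b b hb0 le_rfl ξ).1, (key a b h0 hab ξ).2]
      have h1 := proj_pythag (P b) (hP_proj b hb0).1 (g a (P b ξ - P a ξ)) S
        (by rw [hc b hab, e1]) ih1
      have h2 := proj_pythag (P a) (hP_proj a h0).1 (P a ξ) (P b ξ - P a ξ)
        (key a a h0 le_rfl ξ).1
        (by rw [map_sub, (key a b h0 hab ξ).1, (key a a h0 le_rfl ξ).1, sub_self])
      rw [add_sub_cancel] at h2
      have h3 : ‖g a (P b ξ - P a ξ)‖ ≤ ε * ‖P b ξ - P a ξ‖ :=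
        (g a).le_of_opNorm_le (hε a (by simp)) _
      have h4 : ‖g a (P b ξ - P a ξ)‖ ^ 2 ≤ ε ^ 2 * ‖P b ξ - P a ξ‖ ^ 2 := by
        rw [← mul_pow]
        exact pow_le_pow_left₀ (norm_nonneg _) h3 2
      rw [h1]
      have h5 : ‖P b ξ - P a ξ‖ ^ 2 = ‖P b ξ‖ ^ 2 - ‖P a ξ‖ ^ 2 := by linarith
      rw [h5] at h4
      linarith

lemma le_of_sq_le_sq_aux {a b : ℝ} (hb : 0 ≤ b) (h : a ^ 2 ≤ b ^ 2) : a ≤ b :=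
  le_trans (le_abs_self a) (abs_le_of_sq_le_sq h hb)

lemma refine_bound [CompleteSpace H] (P : ℝ → H →L[ℂ] H)
    (hP_proj : ∀ s, 0 ≤ s → IsSelfAdjoint (P s) ∧ P s ∘L P s = P s)
    (hP_mono : ∀ s u, 0 ≤ s → s ≤ u → P s ∘L P u = P s ∧ P u ∘L P s = P s)
    (f : ℝ → H →L[ℂ] H)
    (hf_adapted : ∀ s u, 0 ≤ s → s ≤ u → f s ∘L P u = P u ∘L f s)
    (t : ℝ) (ξ : H) (ε δ : ℝ) (hε0 : 0 ≤ ε)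
    (hδ : ∀ x ∈ Set.Icc 0 t, ∀ y ∈ Set.Icc 0 t, |x - y| < δ → ‖f x - f y‖ ≤ ε)
    (θ η : Finset ℝ) (hθ : IsPartitionOf 0 t θ) (hη : IsPartitionOf 0 t η)
    (hm : meshOf θ < δ) :
    ‖listSum f (fun s => P s ξ) (θ.sort (· ≤ ·)) -
      listSum f (fun s => P s ξ) ((η ∪ θ).sort (· ≤ ·))‖ ≤ ε * ‖ξ‖ := by
  rw [← listSum_refine hθ f (fun s => P s ξ) η hη.2.2, listSum_sub]
  have hpart : IsPartitionOf 0 t (η ∪ θ) := by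
    refine ⟨Finset.mem_union_right _ hθ.1, Finset.mem_union_right _ hθ.2.1, ?_⟩
    intro x hx
    rcases Finset.mem_union.mp hx with hx | hx
    · exact hη.2.2 x hx
    · exact hθ.2.2 x hx
  obtain ⟨l, hl⟩ := sort_eq_cons hpart
  have hp := Finset.pairwise_sort (η ∪ θ) (· ≤ ·)
  have hmem : ∀ x ∈ (0 :: l), x ∈ Set.Icc 0 t := by
    intro x hx
    rw [← hl] at hx; exact hpart.2.2 x ((Finset.mem_sort _).mp hx)
  rw [hl] at hp ⊢
  have h := (listSum_bound P hP_proj hP_mono (fun x => f (floorOf θ x) - f x) ξ ε l 0 hp le_rfl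
    (by
      intro x hx u hu
      have hx0 := (hmem x hx).1
      have hF := floorOf_mem hθ hx0
      have hF0 := (hθ.2.2 _ hF.1).1
      rw [ContinuousLinearMap.sub_comp, ContinuousLinearMap.comp_sub,
        hf_adapted x u hx0 hu, hf_adapted _ u hF0 (hF.2.trans hu)])
    (by
      intro x hx
      have hxI := hmem x hx
      have hF := floorOf_mem hθ hxI.1
      apply hδ _ (hθ.2.2 _ hF.1) _ hxI
      rw [abs_sub_comm, abs_of_nonneg (by linarith [hF.2])]
      exact lt_of_le_of_lt (sub_floorOf_le hθ hxI) hm)).2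
  refine le_of_sq_le_sq_aux (by positivity) ?_
  rw [mul_pow]
  refine h.trans ?_
  have : 0 ≤ ‖P 0 ξ‖ ^ 2 := by positivity
  gcongr
  linarith

end helpers

/-- For a von Neumann algebra A, a vector Ω, increasing projections (P_t),
an A-valued norm-continuous adapted-commuting f, and X : [0,t] → A with
X(s)Ω = P_s(X(t)Ω), the integral sums S_θ(x'Ω) converge in norm as the mesh of the
partition θ of [0,t] tends to 0 for every x' ∈ A', and the limit I satisfies
I((y'x')Ω) = y' I(x'Ω). -/
theorem right_integral_exists_continuous
    {H : Type*} [NormedAddCommGroup H] [InnerProductSpace ℂ H] [CompleteSpace H]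
    (A : VonNeumannAlgebra H) (Ω : H)
    (P : ℝ → H →L[ℂ] H)
    (hP_proj : ∀ s, 0 ≤ s → IsSelfAdjoint (P s) ∧ P s ∘L P s = P s)
    (hP_mono : ∀ s u, 0 ≤ s → s ≤ u → P s ∘L P u = P s ∧ P u ∘L P s = P s)
    (f : ℝ → H →L[ℂ] H)
    (hf_mem : ∀ s, 0 ≤ s → f s ∈ A)
    (hf_cont : ContinuousOn f (Set.Ici (0 : ℝ)))
    (hf_adapted : ∀ s u, 0 ≤ s → s ≤ u → f s ∘L P u = P u ∘L f s)
    (t : ℝ) (ht : 0 < t)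
    (X : ℝ → H →L[ℂ] H)
    (hX_mem : ∀ s ∈ Set.Icc (0 : ℝ) t, X s ∈ A)
    (hX_mart : ∀ s, 0 ≤ s → s ≤ t → X s Ω = P s (X t Ω)) :
    ∃ I : H → H,
      (∀ x' ∈ A.commutant, ∀ ε > (0 : ℝ), ∃ δ > (0 : ℝ), ∀ θ : Finset ℝ,
        IsPartitionOf 0 t θ → meshOf θ < δ →
          ‖sigmaSum f X θ (x' Ω) - I (x' Ω)‖ < ε) ∧
      (∀ x' ∈ A.commutant, ∀ y' ∈ A.commutant,
        I ((y' * x') Ω) = y' (I (x' Ω))) := by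
  set ξ := X t Ω with hξ
  set Y : ℝ → H := fun s => P s ξ with hY
  -- commutation with the commutant
  have hcomm : ∀ x' ∈ A.commutant, ∀ T ∈ A, ∀ v, T (x' v) = x' (T v) := by
    intro x' hx' T hT v
    have := VonNeumannAlgebra.mem_commutant_iff.mp hx' T hT
    exact congrArg (fun T : H →L[ℂ] H => T v) this
  have hlist : ∀ x' ∈ A.commutant, ∀ (l : List ℝ) (a : ℝ), (∀ x ∈ a :: l, x ∈ Set.Icc 0 t) →
      ((((a :: l).zip (a :: l).tail).map
        (fun p => f p.1 ∘L (X p.2 - X p.1))).sum) (x' Ω) = x' (listSum f Y (a :: l)) := by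
    intro x' hx' l
    induction l with
    | nil => intro a _; simp [listSum]
    | cons b l ih =>
      intro a ha
      have h1 := ih b (fun x hx => ha x (List.mem_cons_of_mem _ hx))
      have haI := ha a (by simp)
      have hbI := ha b (by simp)
      rw [listSum_cons_cons, map_add, ← h1]
      simp only [List.tail_cons, List.zip_cons_cons, List.map_cons, List.sum_cons,
        _root_.add_apply, ContinuousLinearMap.comp_apply,
        _root_.sub_apply]
      congr 1
      rw [hcomm x' hx' _ (hX_mem b hbI), hcomm x' hx' _ (hX_mem a haI), ← map_sub,
        hcomm x' hx' _ (hf_mem a haI.1), hX_mart a haI.1 haI.2, hX_mart b hbI.1 hbI.2]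
  have hsig : ∀ x' ∈ A.commutant, ∀ θ, IsPartitionOf 0 t θ →
      sigmaSum f X θ (x' Ω) = x' (listSum f Y (θ.sort (· ≤ ·))) := by
    intro x' hx' θ hθ
    obtain ⟨l, hl⟩ := sort_eq_cons hθ
    unfold sigmaSum
    rw [hl]
    apply hlist x' hx'
    intro x hx
    rw [← hl] at hx
    exact hθ.2.2 x ((Finset.mem_sort _).mp hx)
  -- Cauchy estimate
  have huc : UniformContinuousOn f (Set.Icc 0 t) :=
    isCompact_Icc.uniformContinuousOn_of_continuous (hf_cont.mono Set.Icc_subset_Ici_self)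
  have hcauchy : ∀ ε > (0:ℝ), ∃ δ > (0:ℝ), ∀ θ η, IsPartitionOf 0 t θ → IsPartitionOf 0 t η →
      meshOf θ < δ → meshOf η < δ →
      ‖listSum f Y (θ.sort (· ≤ ·)) - listSum f Y (η.sort (· ≤ ·))‖ < ε := by
    intro ε hε
    set e := ε / (2 * (‖ξ‖ + 1)) with he
    have he0 : 0 < e := by positivity
    obtain ⟨δ, hδ0, hδ⟩ := Metric.uniformContinuousOn_iff.mp huc e he0
    refine ⟨δ, hδ0, ?_⟩
    have hδ' : ∀ x ∈ Set.Icc 0 t, ∀ y ∈ Set.Icc 0 t, |x - y| < δ → ‖f x - f y‖ ≤ e := by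
      intro x hx y hy hxy
      have := hδ x hx y hy (by rwa [Real.dist_eq])
      rw [dist_eq_norm] at this
      exact this.le
    intro θ η hθ hη h1 h2
    have b1 := refine_bound P hP_proj hP_mono f hf_adapted t ξ e δ he0.le hδ' θ η hθ hη h1
    have b2 := refine_bound P hP_proj hP_mono f hf_adapted t ξ e δ he0.le hδ' η θ hη hθ h2
    rw [Finset.union_comm θ η, norm_sub_rev] at b2
    have b3 := norm_sub_le_norm_sub_add_norm_sub (listSum f Y (θ.sort (· ≤ ·)))
      (listSum f Y ((η ∪ θ).sort (· ≤ ·))) (listSum f Y (η.sort (· ≤ ·)))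
    have b4 : e * ‖ξ‖ * 2 < ε := by
      have : e * (‖ξ‖ + 1) * 2 = ε := by rw [he]; field_simp
      nlinarith
    calc _ ≤ _ := b3
      _ ≤ e * ‖ξ‖ + e * ‖ξ‖ := add_le_add b1 b2
      _ < ε := by linarith
  -- the limit
  have hex : ∀ n : ℕ, ∃ θ, IsPartitionOf 0 t θ ∧ meshOf θ < 1 / ((n:ℝ) + 1) := fun n =>
    exists_partition ht (by positivity)
  choose θs hθs hmesh using hex
  have hsmall : ∀ δ > (0:ℝ), ∃ N, ∀ n ≥ N, meshOf (θs n) < δ := by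
    intro δ hδ
    obtain ⟨N, hN⟩ := exists_nat_one_div_lt hδ
    refine ⟨N, fun n hn => (hmesh n).trans (lt_of_le_of_lt ?_ hN)⟩
    exact Nat.one_div_le_one_div hn
  have hcs : CauchySeq (fun n => listSum f Y ((θs n).sort (· ≤ ·))) := by
    rw [Metric.cauchySeq_iff]
    intro ε hε
    obtain ⟨δ, hδ, h⟩ := hcauchy ε hε
    obtain ⟨N, hN⟩ := hsmall δ hδ
    refine ⟨N, fun m hm n hn => ?_⟩
    rw [dist_eq_norm]
    exact h _ _ (hθs m) (hθs n) (hN m hm) (hN n hn)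
  obtain ⟨J, hJ⟩ := cauchySeq_tendsto_of_complete hcs
  have hlim : ∀ ε > (0:ℝ), ∃ δ > (0:ℝ), ∀ θ, IsPartitionOf 0 t θ → meshOf θ < δ →
      ‖listSum f Y (θ.sort (· ≤ ·)) - J‖ < ε := by
    intro ε hε
    obtain ⟨δ, hδ, h⟩ := hcauchy (ε / 2) (by positivity)
    refine ⟨δ, hδ, fun θ hθ hm => ?_⟩
    obtain ⟨N, hN⟩ := hsmall δ hδ
    have h1 : Filter.Tendsto (fun n => ‖listSum f Y (θ.sort (· ≤ ·)) -
        listSum f Y ((θs n).sort (· ≤ ·))‖) Filter.atTop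
        (nhds ‖listSum f Y (θ.sort (· ≤ ·)) - J‖) := (hJ.const_sub _).norm
    have h2 : ‖listSum f Y (θ.sort (· ≤ ·)) - J‖ ≤ ε / 2 := by
      apply le_of_tendsto h1
      filter_upwards [Filter.eventually_ge_atTop N] with n hn
      exact (h _ _ hθ (hθs n) hm (hN n hn)).le
    linarith
  have hwd : ∀ x' ∈ A.commutant, ∀ y' ∈ A.commutant, x' Ω = y' Ω → x' J = y' J := by
    intro x' hx' y' hy' hxy
    have h1 := (x'.continuous.tendsto J).comp hJ
    have h2 := (y'.continuous.tendsto J).comp hJ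
    refine tendsto_nhds_unique h1 (h2.congr ?_)
    intro n
    simp only [Function.comp]
    rw [← hsig x' hx' _ (hθs n), ← hsig y' hy' _ (hθs n), hxy]
  classical
  let I : H → H := fun v =>
    if h : ∃ x' ∈ A.commutant, x' Ω = v then h.choose J else 0
  have hI : ∀ x' ∈ A.commutant, I (x' Ω) = x' J := by
    intro x' hx'
    have h : ∃ z ∈ A.commutant, z Ω = x' Ω := ⟨x', hx', rfl⟩
    simp only [I, dif_pos h]
    exact hwd _ h.choose_spec.1 _ hx' h.choose_spec.2
  refine ⟨I, ?_, ?_⟩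
  · intro x' hx' ε hε
    obtain ⟨δ, hδ, h⟩ := hlim (ε / (‖x'‖ + 1)) (by positivity)
    refine ⟨δ, hδ, fun θ hθ hm => ?_⟩
    rw [hI x' hx', hsig x' hx' θ hθ, ← map_sub]
    have h1 := h θ hθ hm
    rw [lt_div_iff₀ (by positivity)] at h1
    have h2 := x'.le_opNorm (listSum f Y (θ.sort (· ≤ ·)) - J)
    have h3 := norm_nonneg (listSum f Y (θ.sort (· ≤ ·)) - J)
    nlinarith
  · intro x' hx' y' hy'
    rw [hI _ (mul_mem hy' hx'), hI _ hx']
    rfl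
end
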